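/- Let p = p(n) ∈ [0,1] satisfy 3 log n/(4n) ≤ p(n) for all sufficiently large n, and p(n) → 0 as n → ∞. Then asymptotically almost surely, every orientation of the binomial random graph G(n,p) contains a Sullivan vertex. -/

import Mathlib

open Filter

/-- The outneighbourhood `N1(v)` of `v` in the digraph with arc relation `D`. -/
def outNbr {V : Type*} (D : V → V → Prop) (v : V) : Set V := {w | w ≠ v ∧ D v w}

/-- The inneighbourhood `N⁻(v)` of `v`. -/
def inNbr {V : Type*} (D : V → V → Prop) (v : V) : Set V := {w | w ≠ v ∧ D w v}

/-- The second outneighbourhood `N2(v)` of `v`. -/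
def outNbr2 {V : Type*} (D : V → V → Prop) (v : V) : Set V :=
  {w | w ∉ insert v (outNbr D v) ∧ ∃ u ∈ outNbr D v, D u w}

/-- `v` is a Seymour vertex: `|N2(v)| ≥ |N1(v)|`. -/
def SeymourVertex {V : Type*} (D : V → V → Prop) (v : V) : Prop :=
  (outNbr D v).ncard ≤ (outNbr2 D v).ncard

/-- `v` is a Sullivan vertex: `|N2(v)| ≥ |N⁻(v)|`. -/
def SullivanVertex {V : Type*} (D : V → V → Prop) (v : V) : Prop :=
  (inNbr D v).ncard ≤ (outNbr2 D v).ncard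

/-- An oriented graph: an asymmetric (hence irreflexive and loopless) arc relation. -/
def OrientedGraph {V : Type*} (D : V → V → Prop) : Prop := ∀ u v, D u v → ¬ D v u

/-- `D` is an orientation of the simple graph `G`. -/
def Orients {V : Type*} (D : V → V → Prop) (G : SimpleGraph V) : Prop :=
  OrientedGraph D ∧ ∀ u v, G.Adj u v ↔ (D u v ∨ D v u)

/-- Strong connectivity of a digraph: every vertex reaches every other by a directed path. -/
def StrongConn {V : Type*} (D : V → V → Prop) : Prop := ∀ u v, Relation.ReflTransGen D u v

/-- The number of edges of `G` with one endpoint in `A` and the other in `B`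
(counted via ordered pairs; equals `e(A,B)` for disjoint `A`, `B`). -/
noncomputable def eBtw {V : Type*} (G : SimpleGraph V) (A B : Set V) : ℕ :=
  {p : V × V | p.1 ∈ A ∧ p.2 ∈ B ∧ G.Adj p.1 p.2}.ncard

/-- The number of edges of `G` with both endpoints in `A`. -/
noncomputable def eIn {V : Type*} (G : SimpleGraph V) (A : Set V) : ℕ :=
  {e | e ∈ G.edgeSet ∧ ∀ v ∈ e, v ∈ A}.ncard

open scoped Classical in
/-- The probability that the binomial random graph `G(n,p)` satisfies the property `P`. -/
noncomputable def gnpProb (n : ℕ) (p : ℝ) (P : SimpleGraph (Fin n) → Prop) : ℝ :=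
  ∑ G : SimpleGraph (Fin n),
    if P G then p ^ G.edgeSet.ncard * (1 - p) ^ (n.choose 2 - G.edgeSet.ncard) else 0

section helpers
open Finset
open scoped Classical

/-- edges of `G` in `F`. -/
noncomputable def xCount {n : ℕ} (F : Finset (Sym2 (Fin n))) (G : SimpleGraph (Fin n)) : ℕ :=
  #{e ∈ F | e ∈ G.edgeSet}

noncomputable def allE (n : ℕ) : Finset (Sym2 (Fin n)) := (⊤ : SimpleGraph (Fin n)).edgeFinset

lemma allE_card (n : ℕ) : #(allE n) = n.choose 2 := by
  unfold allE
  rw [SimpleGraph.card_edgeFinset_top_eq_card_choose_two]; simp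

lemma mem_allE {n : ℕ} (e : Sym2 (Fin n)) : e ∈ allE n ↔ ¬ e.IsDiag := by
  unfold allE; simp

lemma sum_gen (n : ℕ) (p : ℝ) (x : Sym2 (Fin n) → ℝ) :
    ∑ G : SimpleGraph (Fin n), (p ^ G.edgeSet.ncard * (1 - p) ^ (n.choose 2 - G.edgeSet.ncard)) *
      ∏ e ∈ G.edgeFinset, x e = ∏ e ∈ allE n, (p * x e + (1 - p)) := by
  rw [Finset.prod_add]
  refine Finset.sum_bij (fun G _ => G.edgeFinset) ?_ ?_ ?_ ?_
  · intro G _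
    simp only [Finset.mem_powerset]
    exact SimpleGraph.edgeFinset_mono le_top
  · intro G _ H _ h
    exact SimpleGraph.edgeFinset_inj.1 h
  · intro t ht
    refine ⟨SimpleGraph.fromEdgeSet (t : Set (Sym2 (Fin n))), mem_univ _, ?_⟩
    ext e
    have := Finset.mem_powerset.1 ht
    simp only [SimpleGraph.edgeFinset, Set.mem_toFinset]
    rw [SimpleGraph.edgeSet_fromEdgeSet]
    constructor
    · intro h; exact h.1
    · intro h
      refine ⟨h, ?_⟩
      have := (mem_allE e).1 (this h)
      simpa using this
  · intro G _
    have hsub : G.edgeFinset ⊆ allE n := SimpleGraph.edgeFinset_mono le_top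
    have hc : G.edgeSet.ncard = #G.edgeFinset := by
      rw [← SimpleGraph.coe_edgeFinset, Set.ncard_coe_finset]
    rw [Finset.prod_mul_distrib, Finset.prod_const, Finset.prod_const,
      Finset.card_sdiff_of_subset hsub, allE_card, hc]
    ring

lemma w_nonneg (n : ℕ) {p : ℝ} (hp : p ∈ Set.Icc (0:ℝ) 1) (G : SimpleGraph (Fin n)) :
    0 ≤ p ^ G.edgeSet.ncard * (1 - p) ^ (n.choose 2 - G.edgeSet.ncard) :=
  mul_nonneg (pow_nonneg hp.1 _) (pow_nonneg (by linarith [hp.2]) _)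

lemma sum_w (n : ℕ) (p : ℝ) :
    ∑ G : SimpleGraph (Fin n), (p ^ G.edgeSet.ncard * (1 - p) ^ (n.choose 2 - G.edgeSet.ncard)) = 1 := by
  have := sum_gen n p (fun _ => 1)
  simpa using this

lemma pr_compl (n : ℕ) (p : ℝ) (P : SimpleGraph (Fin n) → Prop) :
    gnpProb n p P = 1 - gnpProb n p (fun G => ¬ P G) := by
  rw [← sum_w n p]; unfold gnpProb
  rw [← Finset.sum_sub_distrib]
  refine Finset.sum_congr rfl fun G _ => ?_
  by_cases h : P G <;> simp [h]

lemma pr_mono (n : ℕ) {p : ℝ} (hp : p ∈ Set.Icc (0:ℝ) 1) {P Q : SimpleGraph (Fin n) → Prop}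
    (h : ∀ G, P G → Q G) : gnpProb n p P ≤ gnpProb n p Q := by
  unfold gnpProb
  refine Finset.sum_le_sum fun G _ => ?_
  have := w_nonneg n hp G
  by_cases h1 : P G
  · simp [h1, h G h1]
  · by_cases h2 : Q G <;> simp [h1, h2, this]

lemma pr_nonneg (n : ℕ) {p : ℝ} (hp : p ∈ Set.Icc (0:ℝ) 1) (P : SimpleGraph (Fin n) → Prop) :
    0 ≤ gnpProb n p P := by
  unfold gnpProb
  refine Finset.sum_nonneg fun G _ => ?_
  have := w_nonneg n hp G
  split_ifs <;> simp [this]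

lemma pr_or (n : ℕ) {p : ℝ} (hp : p ∈ Set.Icc (0:ℝ) 1) (P Q : SimpleGraph (Fin n) → Prop) :
    gnpProb n p (fun G => P G ∨ Q G) ≤ gnpProb n p P + gnpProb n p Q := by
  unfold gnpProb
  rw [← Finset.sum_add_distrib]
  refine Finset.sum_le_sum fun G _ => ?_
  have := w_nonneg n hp G
  by_cases h1 : P G <;> by_cases h2 : Q G <;> simp [h1, h2, this]

lemma pr_exists (n : ℕ) {p : ℝ} (hp : p ∈ Set.Icc (0:ℝ) 1) {ι : Type*} (I : Finset ι)
    (P : ι → SimpleGraph (Fin n) → Prop) (b : ℝ) (hb : ∀ i ∈ I, gnpProb n p (P i) ≤ b) :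
    gnpProb n p (fun G => ∃ i ∈ I, P i G) ≤ #I * b := by
  have : gnpProb n p (fun G => ∃ i ∈ I, P i G) ≤ ∑ i ∈ I, gnpProb n p (P i) := by
    unfold gnpProb
    rw [Finset.sum_comm]
    refine Finset.sum_le_sum fun G _ => ?_
    have hw := w_nonneg n hp G
    split_ifs with h
    · obtain ⟨i, hi, h⟩ := h
      refine le_trans ?_ (Finset.single_le_sum (f := fun i => if P i G then p ^ G.edgeSet.ncard * (1 - p) ^ (n.choose 2 - G.edgeSet.ncard) else 0) (fun j _ => ?_) hi)
      · simp [h]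
      · split_ifs <;> simp [hw]
    · refine Finset.sum_nonneg fun i _ => ?_
      split_ifs <;> simp [hw]
  refine this.trans ((Finset.sum_le_card_nsmul _ _ b hb).trans ?_)
  simp

lemma pr_chernoff (n : ℕ) {p : ℝ} (hp : p ∈ Set.Icc (0:ℝ) 1) (F : Finset (Sym2 (Fin n)))
    (hF : F ⊆ allE n) (t k : ℝ) (P : SimpleGraph (Fin n) → Prop)
    (hP : ∀ G, P G → t * k ≤ t * xCount F G) :
    gnpProb n p P ≤ Real.exp (p * #F * (Real.exp t - 1) - t * k) := by
  have hg := sum_gen n p (fun e => if e ∈ F then Real.exp t else 1)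
  have h1 : ∀ G : SimpleGraph (Fin n), ∏ e ∈ G.edgeFinset, (if e ∈ F then Real.exp t else 1)
      = Real.exp (t * xCount F G) := by
    intro G
    rw [Finset.prod_ite, Finset.prod_const, Finset.prod_const_one, mul_one, mul_comm, Real.exp_nat_mul]
    congr 2
    ext e; simp [and_comm]
  have h2 : ∏ e ∈ allE n, (p * (if e ∈ F then Real.exp t else 1) + (1 - p))
      ≤ Real.exp (p * #F * (Real.exp t - 1)) := by
    have : ∏ e ∈ allE n, (p * (if e ∈ F then Real.exp t else 1) + (1 - p))
       = ∏ e ∈ F, (p * Real.exp t + (1 - p)) := by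
      rw [← Finset.prod_subset hF]
      · refine Finset.prod_congr rfl fun e he => by simp [he]
      · intro e _ he; simp [he]
    rw [this, Finset.prod_const]
    have h3 : p * Real.exp t + (1 - p) ≤ Real.exp (p * (Real.exp t - 1)) := by
      have := Real.add_one_le_exp (p * (Real.exp t - 1)); linarith
    have h4 : 0 ≤ p * Real.exp t + (1 - p) := by
      have := mul_nonneg hp.1 (Real.exp_pos t).le
      linarith [hp.2]
    refine (pow_le_pow_left₀ h4 h3 _).trans (le_of_eq ?_)
    rw [← Real.exp_nat_mul]; congr 1; ring
  rw [sub_eq_add_neg, Real.exp_add]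
  refine le_trans ?_ (mul_le_mul_of_nonneg_right h2 (Real.exp_pos _).le)
  rw [← hg, Finset.sum_mul]
  unfold gnpProb
  refine Finset.sum_le_sum fun G _ => ?_
  have hw := w_nonneg n hp G
  rw [h1]
  split_ifs with h
  · rw [mul_assoc, ← Real.exp_add]
    have := hP G h
    have h5 : 1 ≤ Real.exp (t * xCount F G + -(t * k)) := Real.one_le_exp (by linarith)
    nlinarith
  · positivity

/-- pairs within `S`. -/
noncomputable def prS {n : ℕ} (S : Finset (Fin n)) : Finset (Sym2 (Fin n)) :=
  S.offDiag.image (Function.uncurry Sym2.mk)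

noncomputable def prV {n : ℕ} (v : Fin n) : Finset (Sym2 (Fin n)) :=
  (univ.erase v).image (fun w => s(v, w))

lemma prS_card {n : ℕ} (S : Finset (Fin n)) : #(prS S) = (#S).choose 2 := Sym2.card_image_offDiag S

lemma prS_sub {n : ℕ} (S : Finset (Fin n)) : prS S ⊆ allE n := by
  intro e he
  simp only [prS, mem_image, mem_offDiag] at he
  obtain ⟨⟨a, b⟩, h, rfl⟩ := he
  rw [mem_allE]; simpa using h.2.2

lemma prV_card {n : ℕ} (v : Fin n) : #(prV v) ≤ n := by
  refine Finset.card_image_le.trans ?_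
  simp

lemma prV_sub {n : ℕ} (v : Fin n) : prV v ⊆ allE n := by
  intro e he
  simp only [prV, mem_image, mem_erase] at he
  obtain ⟨a, h, rfl⟩ := he
  rw [mem_allE]; simpa [eq_comm] using h.1

lemma arcs_le {n : ℕ} {G : SimpleGraph (Fin n)} {D : Fin n → Fin n → Prop} (hD : Orients D G)
    (S : Finset (Fin n)) (T : Finset (Fin n × Fin n))
    (hT : ∀ q ∈ T, D q.1 q.2 ∧ q.1 ∈ S ∧ q.2 ∈ S) : #T ≤ xCount (prS S) G := by
  unfold xCount
  refine Finset.card_le_card_of_injOn (fun q => s(q.1, q.2)) ?_ ?_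
  · intro q hq
    obtain ⟨h1, h2, h3⟩ := hT q hq
    have hne : q.1 ≠ q.2 := by
      intro h; rw [h] at h1; exact hD.1 _ _ h1 h1
    simp only [coe_filter, Set.mem_ofPred_eq, prS, mem_image, mem_offDiag, SimpleGraph.mem_edgeSet]
    exact ⟨⟨q, ⟨h2, h3, hne⟩, rfl⟩, (hD.2 _ _).2 (Or.inl h1)⟩
  · rintro ⟨a, b⟩ hq ⟨c, d⟩ hr h
    simp only [Sym2.eq_iff] at h
    rcases h with ⟨rfl, rfl⟩ | ⟨rfl, rfl⟩
    · rfl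
    · exact absurd (hT _ hr).1 (hD.1 _ _ (hT _ hq).1)

lemma xCount_le_sum {n : ℕ} {G : SimpleGraph (Fin n)} {R : Fin n → Fin n → Prop}
    (hR : ∀ u v, G.Adj u v → R u v ∨ R v u) (S : Finset (Fin n)) :
    xCount (prS S) G ≤ ∑ v ∈ S, #{w | R v w} := by
  rw [← Finset.card_sigma]
  unfold xCount
  refine le_trans (Finset.card_le_card (t := (S.sigma fun v => ({w | R v w} : Finset (Fin n))).image (fun q => s(q.1, q.2))) ?_) Finset.card_image_le
  intro e he
  simp only [mem_filter, prS, mem_image, mem_offDiag] at he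
  obtain ⟨⟨⟨a, b⟩, ⟨ha, hb, _⟩, rfl⟩, h⟩ := he
  simp only [Function.uncurry, SimpleGraph.mem_edgeSet] at h
  simp only [mem_image, mem_sigma, mem_filter, mem_univ, true_and, Function.uncurry]
  rcases hR _ _ h with h | h
  · exact ⟨⟨a, b⟩, ⟨ha, h⟩, rfl⟩
  · exact ⟨⟨b, a⟩, ⟨hb, h⟩, Sym2.eq_swap⟩

lemma few_small {n m : ℕ} {G : SimpleGraph (Fin n)} {R : Fin n → Fin n → Prop}
    (hR : ∀ u v, G.Adj u v → R u v ∨ R v u) (μ : ℝ)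
    (hA : ∀ S : Finset (Fin n), #S = m → μ / 100 * m < xCount (prS S) G) :
    #{v : Fin n | (#{w | R v w} : ℝ) < μ / 100} < m := by
  by_contra! hc
  obtain ⟨S, hS, hSm⟩ := Finset.exists_subset_card_eq hc
  have h1 := hA S hSm
  have h2 : (xCount (prS S) G : ℝ) ≤ ∑ v ∈ S, (#{w | R v w} : ℝ) := by
    exact_mod_cast xCount_le_sum hR S
  have h3 : ∑ v ∈ S, (#{w | R v w} : ℝ) ≤ #S • (μ / 100) := by
    refine Finset.sum_le_card_nsmul _ _ _ fun v hv => ?_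
    have := hS hv
    simp only [mem_filter, mem_univ, true_and] at this
    exact this.le
  rw [hSm, nsmul_eq_mul] at h3
  linarith

lemma det_main {n m s : ℕ} {G : SimpleGraph (Fin n)} {D : Fin n → Fin n → Prop}
    (hD : Orients D G) {μ : ℝ} (hμ : 0 < μ) (hn : 0 < n) (hm : 4 * m ≤ n) (hs : s ≤ n)
    (hdeg : ∀ v, xCount (prV v) G ≤ s)
    (hA : ∀ S : Finset (Fin n), #S = m → μ / 100 * m < xCount (prS S) G)
    (hB : ∀ S : Finset (Fin n), #S = s → (xCount (prS S) G : ℝ) < μ ^ 2 / 40000) :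
    ∃ v, SullivanVertex D v := by
  by_contra! hno
  have hirr : ∀ v w, D v w → w ≠ v := by
    rintro v w h rfl; exact hD.1 _ _ h h
  have key : ∀ v, ((∑ u with D v u, #{w | D u w} : ℕ) : ℝ) ≤ μ ^ 2 / 40000 := by
    intro v
    have h1 := hno v
    unfold SullivanVertex at h1
    push Not at h1
    have hin : inNbr D v = (({w | D w v} : Finset (Fin n)) : Set (Fin n)) := by
      ext w; simp only [inNbr, Set.mem_ofPred_eq, coe_filter, mem_univ, true_and]
      exact ⟨fun h => h.2, fun h => ⟨(hirr _ _ h).symm, h⟩⟩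
    have hout : outNbr D v = (({w | D v w} : Finset (Fin n)) : Set (Fin n)) := by
      ext w; simp only [outNbr, Set.mem_ofPred_eq, coe_filter, mem_univ, true_and]
      exact ⟨fun h => h.2, fun h => ⟨hirr _ _ h, h⟩⟩
    have hd : #{w | D v w} + #{w | D w v} ≤ s := by
      refine le_trans ?_ (hdeg v)
      rw [← Finset.card_union_of_disjoint]
      · unfold xCount
        refine Finset.card_le_card_of_injOn (fun w => s(v, w)) ?_ ?_
        · intro w hw
          simp only [coe_union, coe_filter, mem_univ, true_and, Set.mem_union, Set.mem_ofPred_eq] at hw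
          simp only [coe_filter, Set.mem_ofPred_eq, prV, mem_image, mem_erase, mem_univ, and_true,
            SimpleGraph.mem_edgeSet]
          refine ⟨⟨w, ?_, rfl⟩, (hD.2 _ _).2 hw⟩
          rcases hw with h | h
          · exact hirr _ _ h
          · exact (hirr _ _ h).symm
        · intro a _ b _ h
          simp only [Sym2.eq_iff] at h
          grind
      · rw [Finset.disjoint_left]
        intro w hw hw'
        simp only [mem_filter, mem_univ, true_and] at hw hw'
        exact hD.1 _ _ hw hw'
    set S2 : Finset (Fin n) := (outNbr2 D v).toFinset with hS2
    have hc2 : #S2 < #{w | D w v} := by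
      rw [hin, Set.ncard_coe_finset, ← Set.coe_toFinset (outNbr2 D v), Set.ncard_coe_finset] at h1
      exact h1
    have hU : #(({w | D v w} : Finset (Fin n)) ∪ S2) ≤ s := by
      have := Finset.card_union_le ({w | D v w} : Finset (Fin n)) S2
      omega
    obtain ⟨S, hSsub, hScard⟩ := Finset.exists_superset_card_eq hU (by simpa using hs)
    have h3 : (∑ u with D v u, #{w | D u w}) ≤ xCount (prS S) G := by
      have : (∑ u with D v u, #{w | D u w}) =
          #((univ : Finset (Fin n × Fin n)).filter (fun q => D v q.1 ∧ D q.1 q.2)) := by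
        rw [← Finset.card_sigma]
        refine Finset.card_bij (fun q _ => (q.1, q.2)) ?_ ?_ ?_
        · rintro ⟨a, b⟩ h; simpa using h
        · rintro ⟨a, b⟩ _ ⟨c, d⟩ _ h; simpa using h
        · rintro ⟨a, b⟩ h; exact ⟨⟨a, b⟩, by simpa using h, rfl⟩
      rw [this]
      refine arcs_le hD S _ ?_
      rintro ⟨a, b⟩ hq
      simp only [mem_filter, mem_univ, true_and] at hq
      refine ⟨hq.2, hSsub (by simp [hq.1]), hSsub ?_⟩
      by_cases hvb : D v b
      · simp [hvb]
      · have hbv : b ≠ v := by rintro rfl; exact hD.1 _ _ hq.1 hq.2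
        simp only [mem_union, hS2, Set.mem_toFinset]
        right
        refine ⟨?_, a, ?_, hq.2⟩
        · rintro (h | h)
          · exact hbv h
          · exact hvb h.2
        · exact ⟨hirr _ _ hq.1, hq.1⟩
    have h4 := hB S hScard
    have h5 : ((∑ u with D v u, #{w | D u w} : ℕ) : ℝ) ≤ xCount (prS S) G := by exact_mod_cast h3
    linarith
  have hsum : (∑ v, (∑ u with D v u, #{w | D u w})) = ∑ u, #{v | D v u} * #{w | D u w} := by
    simp_rw [Finset.sum_filter]
    rw [Finset.sum_comm]
    refine Finset.sum_congr rfl fun u _ => ?_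
    rw [← Finset.sum_filter, Finset.sum_const, smul_eq_mul]
  have hup : ((∑ v, (∑ u with D v u, #{w | D u w}) : ℕ) : ℝ) ≤ n * (μ ^ 2 / 40000) := by
    rw [Nat.cast_sum]
    refine (Finset.sum_le_card_nsmul univ _ _ fun v _ => key v).trans ?_
    simp
  have hAo := few_small (R := D) (fun u v h => (hD.2 u v).1 h) μ hA
  have hAi := few_small (R := fun a b => D b a) (fun u v h => ((hD.2 u v).1 h).symm) μ hA
  set A1 : Finset (Fin n) := {v : Fin n | (#{w | D v w} : ℝ) < μ / 100}
  set A2 : Finset (Fin n) := {v : Fin n | (#{w | D w v} : ℝ) < μ / 100}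
  have hcard : (n : ℝ) / 2 < #(univ \ (A1 ∪ A2)) := by
    have e1 := Finset.card_union_le A1 A2
    have e2 : #(univ \ (A1 ∪ A2)) + #(A1 ∪ A2) = n := by
      rw [Finset.card_sdiff_add_card_eq_card (subset_univ _)]; simp
    have e3 : n < 2 * #(univ \ (A1 ∪ A2)) := by omega
    have e4 : (n : ℝ) < 2 * #(univ \ (A1 ∪ A2)) := by exact_mod_cast e3
    linarith
  have hlow : (#(univ \ (A1 ∪ A2)) : ℝ) * (μ ^ 2 / 10000) ≤
      ((∑ u, #{v | D v u} * #{w | D u w} : ℕ) : ℝ) := by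
    rw [Nat.cast_sum, ← nsmul_eq_mul]
    refine le_trans (Finset.card_nsmul_le_sum (univ \ (A1 ∪ A2))
      (fun u => ((#{v | D v u} * #{w | D u w} : ℕ) : ℝ)) _ fun u hu => ?_)
      (Finset.sum_le_sum_of_subset_of_nonneg (subset_univ _) fun _ _ _ => by positivity)
    simp only [A1, A2, Finset.mem_sdiff, mem_univ, true_and, mem_union, mem_filter, not_or, not_lt] at hu
    push_cast
    have := mul_le_mul hu.2 hu.1 (by positivity) (by positivity)
    refine le_trans (le_of_eq ?_) this
    ring
  rw [hsum] at hup
  have hpos : 0 < μ ^ 2 := by positivity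
  have hn' : (0:ℝ) < n := by exact_mod_cast hn
  have : (n : ℝ) / 2 * (μ ^ 2 / 10000) ≤ n * (μ ^ 2 / 40000) := by
    refine le_trans ?_ (hlow.trans hup)
    exact mul_le_mul_of_nonneg_right hcard.le (by positivity)
  have := mul_pos hn' hpos
  linarith

lemma prob_main (n : ℕ) {p : ℝ} (hp : p ∈ Set.Icc (0:ℝ) 1) (hn : 480 ≤ n)
    (hμ : 480 ≤ n * p) (hL : Real.log n ≤ 4 / 3 * (n * p)) (hp6 : p ≤ 1 / 6)
    (hl : 1800000 ≤ - Real.log p) :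
    1 - 3 * Real.exp (-(n * p)) ≤ gnpProb n p (fun G =>
        ∀ D : Fin n → Fin n → Prop, Orients D G → ∃ v, SullivanVertex D v) := by
  set μ : ℝ := n * p with hμdef
  have hn0 : (480 : ℝ) ≤ n := by exact_mod_cast hn
  have hp0 : 0 < p := by
    rcases hp.1.lt_or_eq with h | h
    · exact h
    · rw [← h] at hμdef; simp at hμdef; linarith
  set s : ℕ := ⌈5 * μ⌉₊ with hs
  have hs1 : 5 * μ ≤ s := Nat.le_ceil _
  have hs2 : (s : ℝ) ≤ 6 * μ := by
    have := Nat.ceil_lt_add_one (a := 5 * μ) (by linarith); linarith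
  have hsn : s ≤ n := by
    have : (s : ℝ) ≤ n := by
      refine hs2.trans ?_
      rw [hμdef]; nlinarith
    exact_mod_cast this
  set m : ℕ := n / 4 with hm
  have hnexp : (n : ℝ) = Real.exp (Real.log n) := (Real.exp_log (by linarith)).symm
  -- event 1
  have b1 : gnpProb n p (fun G => ∃ v ∈ (univ : Finset (Fin n)), s < xCount (prV v) G)
      ≤ Real.exp (-μ) := by
    refine (pr_exists n hp univ _ (Real.exp (-3 * μ)) fun v _ => ?_).trans ?_
    · refine (pr_chernoff n hp (prV v) (prV_sub v) 1 (5 * μ) _ ?_).trans ?_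
      · intro G h
        have : (s : ℝ) < xCount (prV v) G := by exact_mod_cast h
        linarith
      · rw [Real.exp_le_exp]
        have h1 : (#(prV v) : ℝ) ≤ n := by exact_mod_cast prV_card v
        have h2 : p * #(prV v) ≤ μ := by rw [hμdef, mul_comm]; exact mul_le_mul_of_nonneg_right h1 hp0.le
        have h3 := Real.exp_one_lt_d9
        have h4 : 0 ≤ p * #(prV v) := mul_nonneg hp0.le (Nat.cast_nonneg _)
        nlinarith
    · rw [Finset.card_univ, Fintype.card_fin]
      nth_rewrite 1 [hnexp]
      rw [← Real.exp_add, Real.exp_le_exp]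
      linarith
  -- event 2
  have b2 : gnpProb n p (fun G => ∃ S ∈ powersetCard s (univ : Finset (Fin n)),
      μ ^ 2 / 40000 ≤ xCount (prS S) G) ≤ Real.exp (-μ) := by
    refine (pr_exists n hp _ _ (Real.exp (36 * μ ^ 2 - 45 * μ ^ 2)) fun S hS => ?_).trans ?_
    · refine (pr_chernoff n hp (prS S) (prS_sub S) (- Real.log p) (μ ^ 2 / 40000) _ ?_).trans ?_
      · intro G h
        exact mul_le_mul_of_nonneg_left h (by linarith)
      · rw [Real.exp_le_exp, Real.exp_neg, Real.exp_log hp0, prS_card, (mem_powersetCard.1 hS).2]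
        have h1 : (s.choose 2 : ℝ) ≤ s ^ 2 := by exact_mod_cast Nat.choose_le_pow s 2
        have h2 : (s : ℝ) ^ 2 ≤ 36 * μ ^ 2 := by nlinarith
        have h3 : p * (s.choose 2 : ℝ) * (p⁻¹ - 1) = (s.choose 2 : ℝ) * (1 - p) := by
          field_simp
        have h4 : (0:ℝ) ≤ s.choose 2 := by positivity
        have h5 : (s.choose 2 : ℝ) * (1 - p) ≤ s.choose 2 := by nlinarith
        have h6 : 1800000 * (μ ^ 2 / 40000) ≤ - Real.log p * (μ ^ 2 / 40000) := by
          gcongr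
        rw [h3]; linarith
    · rw [card_powersetCard, Finset.card_univ, Fintype.card_fin]
      have h1 : (n.choose s : ℝ) ≤ Real.exp (8 * μ ^ 2) := by
        have : (n.choose s : ℝ) ≤ n ^ s := by exact_mod_cast Nat.choose_le_pow n s
        refine this.trans ?_
        nth_rewrite 1 [hnexp]
        rw [← Real.exp_nat_mul, Real.exp_le_exp]
        have h0 : 0 ≤ Real.log n := Real.log_nonneg (by linarith)
        have := mul_le_mul hs2 hL h0 (by linarith)
        linarith
      refine (mul_le_mul_of_nonneg_right h1 (Real.exp_pos _).le).trans ?_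
      rw [← Real.exp_add, Real.exp_le_exp]
      nlinarith
  -- event 3
  have b3 : gnpProb n p (fun G => ∃ S ∈ powersetCard m (univ : Finset (Fin n)),
      (xCount (prS S) G : ℝ) ≤ μ / 100 * m) ≤ Real.exp (-μ) := by
    have hm1 : (n : ℝ) / 6 + 1 ≤ m := by
      have : n + 6 ≤ 6 * m := by omega
      have : (n : ℝ) + 6 ≤ 6 * m := by exact_mod_cast this
      linarith
    refine (pr_exists n hp _ _ (Real.exp (- (μ * n / 240))) fun S hS => ?_).trans ?_
    · refine (pr_chernoff n hp (prS S) (prS_sub S) (-1) (μ / 100 * m) _ ?_).trans ?_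
      · intro G h
        linarith
      · rw [Real.exp_le_exp, prS_card, (mem_powersetCard.1 hS).2, Nat.cast_choose_two]
        have h1 : Real.exp (-1) ≤ 1 / 2 := by
          have := Real.exp_neg_one_lt_d9; linarith
        have h2 : (m : ℝ) * n / 12 ≤ (m : ℝ) * (m - 1) / 2 := by
          have : (0:ℝ) ≤ m := by positivity
          nlinarith
        have h3 : μ * m / 12 ≤ p * ((m : ℝ) * (m - 1) / 2) := by
          have := mul_le_mul_of_nonneg_left h2 hp0.le
          rw [hμdef]; linarith
        have h4 : 0 ≤ μ * m := by positivity
        have h5 : p * ((m : ℝ) * (m - 1) / 2) * (Real.exp (-1) - 1) ≤ (μ * m / 12) * (-1/2) := by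
          have : 0 ≤ p * ((m : ℝ) * (m - 1) / 2) := by linarith
          nlinarith
        have h6 : μ * n / 6 ≤ μ * m := by
          have : μ * (n / 6) ≤ μ * m := mul_le_mul_of_nonneg_left (by linarith) (by linarith)
          linarith
        linarith
    · rw [card_powersetCard, Finset.card_univ, Fintype.card_fin]
      have h1 : (n.choose m : ℝ) ≤ Real.exp n := by
        have : (n.choose m : ℝ) ≤ 2 ^ n := by exact_mod_cast Nat.choose_le_two_pow n m
        refine this.trans ?_
        rw [← mul_one (n : ℝ), Real.exp_nat_mul]
        have := Real.exp_one_gt_d9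
        gcongr; linarith
      refine (mul_le_mul_of_nonneg_right h1 (Real.exp_pos _).le).trans ?_
      rw [← Real.exp_add, Real.exp_le_exp]
      nlinarith
  rw [pr_compl]
  have hbad : gnpProb n p (fun G => ¬ ∀ D : Fin n → Fin n → Prop, Orients D G →
      ∃ v, SullivanVertex D v) ≤ gnpProb n p (fun G =>
      (∃ v ∈ (univ : Finset (Fin n)), s < xCount (prV v) G) ∨
      ((∃ S ∈ powersetCard s (univ : Finset (Fin n)), μ ^ 2 / 40000 ≤ xCount (prS S) G) ∨
      (∃ S ∈ powersetCard m (univ : Finset (Fin n)),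
        (xCount (prS S) G : ℝ) ≤ μ / 100 * m))) := by
    refine pr_mono n hp fun G h => ?_
    by_contra hc
    apply h
    intro D hD
    simp only [not_or, not_exists, not_and, not_lt, not_le, mem_univ, true_implies,
      mem_powersetCard, subset_univ, true_and] at hc
    exact det_main hD (μ := μ) (by linarith) (by omega) (by omega) hsn hc.1 hc.2.2 hc.2.1
  have h1 := pr_or n hp (fun G => ∃ v ∈ (univ : Finset (Fin n)), s < xCount (prV v) G)
    (fun G => (∃ S ∈ powersetCard s (univ : Finset (Fin n)), μ ^ 2 / 40000 ≤ xCount (prS S) G) ∨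
      (∃ S ∈ powersetCard m (univ : Finset (Fin n)), (xCount (prS S) G : ℝ) ≤ μ / 100 * m))
  have h2 := pr_or n hp
    (fun G => (∃ S ∈ powersetCard s (univ : Finset (Fin n)), μ ^ 2 / 40000 ≤ xCount (prS S) G))
    (fun G => (∃ S ∈ powersetCard m (univ : Finset (Fin n)),
      (xCount (prS S) G : ℝ) ≤ μ / 100 * m))
  linarith

end helpers

/-- if `p = p(n) ∈ [0,1]` satisfies `3 log n/(4n) ≤ p(n)` for large `n`
and `p(n) → 0`, then a.a.s. every orientation of `G(n,p)` contains a Sullivan vertex. -/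
theorem stmt_12 (p : ℕ → ℝ) (hp : ∀ n, p n ∈ Set.Icc (0 : ℝ) 1)
    (hlb : ∀ᶠ n : ℕ in atTop, 3 * Real.log n / (4 * n) ≤ p n)
    (h0 : Tendsto p atTop (nhds 0)) :
    Tendsto (fun n => gnpProb n (p n) (fun G =>
        ∀ D : Fin n → Fin n → Prop, Orients D G → ∃ v, SullivanVertex D v))
      atTop (nhds 1) := by
  have hlog : Tendsto (fun n : ℕ => Real.log n) atTop atTop :=
    Real.tendsto_log_atTop.comp tendsto_natCast_atTop_atTop
  have hL : ∀ᶠ n : ℕ in atTop, 3 / 4 * Real.log n ≤ n * p n := by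
    filter_upwards [hlb, eventually_ge_atTop 1] with n h hn
    have hn' : (0:ℝ) < n := by exact_mod_cast hn
    rw [div_le_iff₀ (by positivity)] at h
    linarith
  have hμ : Tendsto (fun n : ℕ => n * p n) atTop atTop :=
    tendsto_atTop_mono' atTop hL (hlog.const_mul_atTop (by norm_num))
  have hlow : Tendsto (fun n : ℕ => 1 - 3 * Real.exp (-(n * p n))) atTop (nhds 1) := by
    have h1 := Real.tendsto_exp_neg_atTop_nhds_zero.comp hμ
    have := (h1.const_mul 3).const_sub 1
    simpa using this
  refine tendsto_of_tendsto_of_tendsto_of_le_of_le' hlow tendsto_const_nhds ?_ ?_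
  · filter_upwards [hL, hμ.eventually_ge_atTop 480, eventually_ge_atTop 480,
      h0.eventually_le_const (show (0:ℝ) < 1 / 6 by norm_num),
      h0.eventually_le_const (Real.exp_pos (-1800000))] with n h1 h2 h3 h4 h5
    refine prob_main n (hp n) h3 h2 (by linarith) h4 ?_
    have hpos : 0 < p n := by
      rcases (hp n).1.lt_or_eq with h | h
      · exact h
      · rw [← h] at h2; norm_num at h2
    have := Real.log_le_log hpos h5
    rw [Real.log_exp] at this
    linarith
  · refine Eventually.of_forall fun n => ?_
    rw [pr_compl]
    linarith [pr_nonneg n (hp n) (fun G => ¬ ∀ D : Fin n → Fin n → Prop, Orients D G →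
      ∃ v, SullivanVertex D v)]
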